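/- There exists $\varepsilon > 0$ such that, writing $\mathcal{C}_n(\varepsilon)$ for the set of partitions in $\mathcal{P}_n$ whose cut score is at most $\varepsilon n^2$, we have $\lim_{n\to\infty} |\mathcal{C}_n(\varepsilon)|/|\mathcal{P}_n| = 0$. -/

import Mathlib

open Filter

/-- The `n × n` grid graph: vertices are pairs in `Fin n × Fin n`, adjacent iff they agree
in one coordinate and differ by exactly 1 in the other. -/
def gridGraph (n : ℕ) : SimpleGraph (Fin n × Fin n) :=
  SimpleGraph.fromRel (fun a b =>
    (a.1 = b.1 ∧ (a.2 : ℕ) + 1 = (b.2 : ℕ)) ∨ (a.2 = b.2 ∧ (a.1 : ℕ) + 1 = (b.1 : ℕ)))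

/-- `P` is a partition of the vertex set of the `n × n` grid graph into `n` parts,
each of size `n` and each inducing a connected subgraph. -/
def IsGridPartition (n : ℕ) (P : Finset (Finset (Fin n × Fin n))) : Prop :=
  P.card = n ∧
  (∀ s ∈ P, s.card = n) ∧
  (∀ s ∈ P, ((gridGraph n).induce (↑s : Set (Fin n × Fin n))).Connected) ∧
  (∀ v : Fin n × Fin n, ∃! s, s ∈ P ∧ v ∈ s)

/-- The number of partitions of the `n × n` grid graph into `n` connected parts of size `n`. -/
noncomputable def gridPartitionCount (n : ℕ) : ℕ :=
  Nat.card {P : Finset (Finset (Fin n × Fin n)) // IsGridPartition n P}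

/-- The cut score of a partition: the number of edges of the grid graph whose two endpoints
lie in different parts. -/
noncomputable def cutScore (n : ℕ) (P : Finset (Finset (Fin n × Fin n))) : ℕ :=
  {e ∈ (gridGraph n).edgeSet | ¬ ∃ s ∈ P, ∀ v ∈ e, v ∈ s}.ncard


lemma conn_of_rank {V : Type*} (G : SimpleGraph V) (s : Set V) (ρ : V → ℕ) (root : V)
    (hne : s.Nonempty)
    (h : ∀ v ∈ s, v = root ∨ ∃ w ∈ s, G.Adj v w ∧ ρ w < ρ v) : (G.induce s).Connected := by
  have key : ∀ (k : ℕ) (v : V) (hv : v ∈ s), ρ v = k →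
      ∃ hr : root ∈ s, (G.induce s).Reachable ⟨v, hv⟩ ⟨root, hr⟩ := by
    intro k
    induction k using Nat.strong_induction_on with
    | _ k ih =>
      intro v hv hk
      rcases h v hv with rfl | ⟨w, hw, hadj, hlt⟩
      · exact ⟨hv, SimpleGraph.Reachable.refl _⟩
      · obtain ⟨hr, hreach⟩ := ih (ρ w) (hk ▸ hlt) w hw rfl
        refine ⟨hr, SimpleGraph.Reachable.trans (SimpleGraph.Adj.reachable ?_) hreach⟩
        simpa using hadj
  obtain ⟨v0, hv0⟩ := hne
  have : Nonempty s := ⟨⟨v0, hv0⟩⟩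
  refine SimpleGraph.Connected.mk ?_
  rintro ⟨v, hv⟩ ⟨w, hw⟩
  obtain ⟨_, h1⟩ := key _ v hv rfl
  obtain ⟨_, h2⟩ := key _ w hw rfl
  exact h1.trans h2.symm

/-- Base labelling: columns are grouped in pairs, each pair is split in a top and a bottom part. -/
def baseLab (n : ℕ) (v : ℕ × ℕ) : ℕ :=
  if v.2 / 2 * 2 + 1 < n then
    (if 2 * v.1 + v.2 % 2 < n then v.2 / 2 * 2 else v.2 / 2 * 2 + 1) else v.2

/-- Position of a cell inside its part of the base labelling. -/
def baseRest (n : ℕ) (v : ℕ × ℕ) : ℕ :=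
  if v.2 / 2 * 2 + 1 < n then
    (if 2 * v.1 + v.2 % 2 < n then 2 * v.1 + v.2 % 2 else 2 * v.1 + v.2 % 2 - n) else v.1

/-- Local swaps prescribed by a set of positions. -/
def sw (S : Finset (ℕ × ℕ)) (v : ℕ × ℕ) : ℕ × ℕ :=
  if v.1 % 2 = 0 ∧ v.2 % 4 = 1 ∧ (v.1 / 2, v.2 / 4) ∈ S then (v.1 + 1, v.2 + 1)
  else if v.1 % 2 = 1 ∧ v.2 % 4 = 2 ∧ (v.1 / 2, v.2 / 4) ∈ S then (v.1 - 1, v.2 - 1)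
  else v

lemma sw_sw (S : Finset (ℕ × ℕ)) (v : ℕ × ℕ) : sw S (sw S v) = v := by
  obtain ⟨r, c⟩ := v
  by_cases h1 : r % 2 = 0 ∧ c % 4 = 1 ∧ (r / 2, c / 4) ∈ S
  · have e : sw S (r, c) = (r + 1, c + 1) := by simp [sw, h1]
    have e1 : (r + 1) / 2 = r / 2 := by omega
    have e2 : (c + 1) / 4 = c / 4 := by omega
    have e3 : (r + 1) % 2 = 1 := by omega
    have e4 : (c + 1) % 4 = 2 := by omega
    rw [e]
    simp [sw, e1, e2, e3, e4, h1.2.2]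
  · by_cases h2 : r % 2 = 1 ∧ c % 4 = 2 ∧ (r / 2, c / 4) ∈ S
    · have e : sw S (r, c) = (r - 1, c - 1) := by simp [sw, h2]
      have e1 : (r - 1) / 2 = r / 2 := by omega
      have e2 : (c - 1) / 4 = c / 4 := by omega
      have e3 : (r - 1) % 2 = 0 := by omega
      have e4 : (c - 1) % 4 = 1 := by omega
      rw [e]
      simp only [sw, e1, e2, e3, e4, h2.2.2]
      simp
      omega
    · have e : sw S (r, c) = (r, c) := by simp only [sw, h1, h2, if_false]
      rw [e, e]

/-- The set of admissible swap positions. -/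
def pos (n : ℕ) : Finset (ℕ × ℕ) := Finset.range (n / 8) ×ˢ Finset.range (n / 4)

lemma mem_pos {n : ℕ} {S : Finset (ℕ × ℕ)} (hS : S ⊆ pos n) {i j : ℕ} (h : (i, j) ∈ S) :
    i < n / 8 ∧ j < n / 4 := by
  have := hS h
  simpa [pos] using this

lemma sw_lt {n : ℕ} {S : Finset (ℕ × ℕ)} (hS : S ⊆ pos n) {v : ℕ × ℕ} (h1 : v.1 < n)
    (h2 : v.2 < n) : (sw S v).1 < n ∧ (sw S v).2 < n := by
  unfold sw
  split_ifs with a b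
  · have := mem_pos hS a.2.2
    constructor <;> dsimp only <;> omega
  · constructor <;> dsimp only <;> omega
  · exact ⟨h1, h2⟩

lemma base_lt {n : ℕ} {v : ℕ × ℕ} (h1 : v.1 < n)
    (h2 : v.2 < n) : baseLab n v < n ∧ baseRest n v < n := by
  unfold baseLab baseRest
  split_ifs <;> omega

lemma base_inj {n : ℕ} {v w : ℕ × ℕ} (h1 : v.1 < n)
    (h2 : v.2 < n) (h3 : w.1 < n) (h4 : w.2 < n) (hl : baseLab n v = baseLab n w)
    (hr : baseRest n v = baseRest n w) : v = w := by
  obtain ⟨a, b⟩ := v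
  obtain ⟨c, d⟩ := w
  unfold baseLab at hl
  unfold baseRest at hr
  dsimp only at *
  rw [Prod.mk.injEq]
  split_ifs at hl hr <;> omega

/-- The labelling attached to a set of swaps. -/
def lab (n : ℕ) (S : Finset (ℕ × ℕ)) (r c : ℕ) : ℕ := baseLab n (sw S (r, c))

lemma lab_a {n : ℕ} {S : Finset (ℕ × ℕ)} {r c : ℕ} (h : (r / 2, c / 4) ∈ S)
    (hS : S ⊆ pos n) : lab n S r c =
    if r % 2 = 0 ∧ c % 4 = 1 then c + 1 else if r % 2 = 1 ∧ c % 4 = 2 then c - 2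
    else c / 2 * 2 := by
  have := mem_pos hS h
  unfold lab sw
  simp only [h, and_true]
  split_ifs <;> simp only [baseLab] <;> split_ifs <;> omega

lemma lab_b {n : ℕ} {S : Finset (ℕ × ℕ)} {r c : ℕ} (h : (r / 2, c / 4) ∉ S) :
    lab n S r c = if c / 2 * 2 + 1 < n then
    (if 2 * r + c % 2 < n then c / 2 * 2 else c / 2 * 2 + 1) else c := by
  unfold lab sw
  simp only [h, and_false, if_false, baseLab]

/-- Root of each part. -/
def rootOf (n l : ℕ) : ℕ × ℕ :=
  if l % 2 = 1 then (n - 1, l) else if l % 4 = 0 then (0, l) else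
    if l + 1 = n then (0, l) else (0, l + 1)

/-- Rank inside each part. -/
def rankOf (n l r c : ℕ) : ℕ :=
  if l % 2 = 1 then 2 * (n - r) + (l - c) else if l % 4 = 0 then 4 * r + (c - l) else
    4 * r + (l + 1 - c)

lemma step {n : ℕ} {S : Finset (ℕ × ℕ)} (hS : S ⊆ pos n) {r c : ℕ} (hr : r < n) (hc : c < n) :
    (r, c) = rootOf n (lab n S r c) ∨
    ∃ r' c', r' < n ∧ c' < n ∧ lab n S r' c' = lab n S r c ∧
      ((r = r' ∧ (c + 1 = c' ∨ c' + 1 = c)) ∨ (c = c' ∧ (r + 1 = r' ∨ r' + 1 = r))) ∧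
      rankOf n (lab n S r c) r' c' < rankOf n (lab n S r c) r c := by
  -- general tool: value of lab
  have val : ∀ r c, ((r / 2, c / 4) ∈ S ∧ r / 2 < n / 8 ∧ c / 4 < n / 4 ∧ lab n S r c =
      if r % 2 = 0 ∧ c % 4 = 1 then c + 1 else if r % 2 = 1 ∧ c % 4 = 2 then c - 2
      else c / 2 * 2) ∨ ((r / 2, c / 4) ∉ S ∧ lab n S r c = if c / 2 * 2 + 1 < n then
    (if 2 * r + c % 2 < n then c / 2 * 2 else c / 2 * 2 + 1) else c) := by
    intro r c
    by_cases h : (r / 2, c / 4) ∈ S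
    · exact Or.inl ⟨h, (mem_pos hS h).1, (mem_pos hS h).2, lab_a h hS⟩
    · exact Or.inr ⟨h, lab_b h⟩
  have v0 := val r c
  generalize hl : lab n S r c = l at *
  by_cases l1 : l % 2 = 1
  · -- bottom part
    have hcl : (c = l ∨ c + 1 = l) ∧ n ≤ 2 * r + c % 2 := by
      rcases v0 with ⟨-, a, b, e⟩ | ⟨-, e⟩ <;> split_ifs at e <;> omega
    by_cases hr1 : r + 1 < n
    · right
      refine ⟨r + 1, c, hr1, hc, ?_, Or.inr ⟨rfl, Or.inl rfl⟩, ?_⟩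
      · rcases val (r + 1) c with ⟨-, a, b, e⟩ | ⟨-, e⟩ <;>
        rcases v0 with ⟨-, a', b', e'⟩ | ⟨-, e'⟩ <;> split_ifs at e e' <;> omega
      · simp only [rankOf, l1, if_true]; omega
    · by_cases hc1 : c = l
      · left
        simp only [rootOf, l1, if_true, Prod.mk.injEq]; omega
      · right
        have hln : l < n := by
          rcases v0 with ⟨-, a', b', e'⟩ | ⟨-, e'⟩ <;> split_ifs at e' <;> omega
        refine ⟨r, c + 1, hr, by omega, ?_, Or.inl ⟨rfl, Or.inl rfl⟩, ?_⟩
        · rcases val r (c + 1) with ⟨-, a, b, e⟩ | ⟨-, e⟩ <;>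
          rcases v0 with ⟨-, a', b', e'⟩ | ⟨-, e'⟩ <;> split_ifs at e e' <;> omega
        · simp only [rankOf, l1, if_true]; omega
  · by_cases l4 : l % 4 = 0
    · by_cases hc1 : c = l
      · by_cases hr0 : r = 0
        · left
          simp only [rootOf, l1, l4, if_true, if_false, Prod.mk.injEq]; omega
        · right
          refine ⟨r - 1, c, by omega, hc, ?_, Or.inr ⟨rfl, Or.inr (by omega)⟩, ?_⟩
          · rcases val (r - 1) c with ⟨-, a, b, e⟩ | ⟨-, e⟩ <;>
            rcases v0 with ⟨-, a', b', e'⟩ | ⟨-, e'⟩ <;> split_ifs at e e' <;> omega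
          · simp only [rankOf, l1, l4, if_true, if_false]; omega
      · right
        have hcl : c = l + 1 ∨ c = l + 2 := by
          rcases v0 with ⟨-, a', b', e'⟩ | ⟨-, e'⟩ <;> split_ifs at e' <;> omega
        have hc4 : (c - 1) / 4 = c / 4 := by omega
        refine ⟨r, c - 1, by omega, by omega, ?_, Or.inl ⟨rfl, Or.inr (by omega)⟩, ?_⟩
        · have v1 := val r (c - 1)
          rw [hc4] at v1
          rcases v1 with ⟨m, a, b, e⟩ | ⟨m, e⟩ <;>
          rcases v0 with ⟨m', a', b', e'⟩ | ⟨m', e'⟩ <;>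
          first
          | (exfalso; exact m' m)
          | (exfalso; exact m m')
          | (split_ifs at e e' <;> omega)
        · simp only [rankOf, l1, l4, if_true, if_false]; omega
    · by_cases ln : l + 1 = n
      · have hcl : c = l := by
          rcases v0 with ⟨-, a', b', e'⟩ | ⟨-, e'⟩ <;> split_ifs at e' <;> omega
        by_cases hr0 : r = 0
        · left
          simp only [rootOf, l1, l4, ln, if_true, if_false, Prod.mk.injEq]; omega
        · right
          refine ⟨r - 1, c, by omega, hc, ?_, Or.inr ⟨rfl, Or.inr (by omega)⟩, ?_⟩
          · rcases val (r - 1) c with ⟨-, a, b, e⟩ | ⟨-, e⟩ <;>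
            rcases v0 with ⟨-, a', b', e'⟩ | ⟨-, e'⟩ <;> split_ifs at e e' <;> omega
          · simp only [rankOf, l1, l4, if_true, if_false]; omega
      · have hln : l + 1 < n := by
          rcases v0 with ⟨-, a', b', e'⟩ | ⟨-, e'⟩ <;> split_ifs at e' <;> omega
        by_cases hc1 : c = l + 1
        · by_cases hr0 : r = 0
          · left
            simp only [rootOf, l1, l4, ln, if_false, Prod.mk.injEq]; omega
          · right
            refine ⟨r - 1, c, by omega, hc, ?_, Or.inr ⟨rfl, Or.inr (by omega)⟩, ?_⟩
            · rcases val (r - 1) c with ⟨-, a, b, e⟩ | ⟨-, e⟩ <;>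
              rcases v0 with ⟨-, a', b', e'⟩ | ⟨-, e'⟩ <;> split_ifs at e e' <;> omega
            · simp only [rankOf, l1, l4, if_false]; omega
        · right
          have hcl : c = l ∨ c + 1 = l := by
            rcases v0 with ⟨-, a', b', e'⟩ | ⟨-, e'⟩ <;> split_ifs at e' <;> omega
          by_cases hr2 : c = l ∧ n ≤ 2 * r + 1
          · refine ⟨r - 1, c, by omega, hc, ?_, Or.inr ⟨rfl, Or.inr (by omega)⟩, ?_⟩
            · rcases val (r - 1) c with ⟨-, a, b, e⟩ | ⟨-, e⟩ <;>
              rcases v0 with ⟨-, a', b', e'⟩ | ⟨-, e'⟩ <;> split_ifs at e e' <;> omega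
            · simp only [rankOf, l1, l4, if_false]; omega
          · have hc4 : (c + 1) / 4 = c / 4 := by omega
            refine ⟨r, c + 1, by omega, by omega, ?_, Or.inl ⟨rfl, Or.inl rfl⟩, ?_⟩
            · have v1 := val r (c + 1)
              rw [hc4] at v1
              rcases v1 with ⟨m, a, b, e⟩ | ⟨m, e⟩ <;>
              rcases v0 with ⟨m', a', b', e'⟩ | ⟨m', e'⟩ <;>
              first
              | (exfalso; exact m' m)
              | (exfalso; exact m m')
              | (split_ifs at e e' <;> omega)
            · simp only [rankOf, l1, l4, if_false]; omega

/-- The partition of the grid into the fibres of a labelling. -/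
def fibers {n : ℕ} (f : Fin n × Fin n → Fin n) : Finset (Finset (Fin n × Fin n)) :=
  Finset.univ.image (fun l => Finset.univ.filter (fun v => f v = l))

lemma same_fiber {n : ℕ} (f : Fin n × Fin n → Fin n) (v w : Fin n × Fin n) :
    (∃ s ∈ fibers f, v ∈ s ∧ w ∈ s) ↔ f v = f w := by
  constructor
  · rintro ⟨s, hs, hv, hw⟩
    simp only [fibers, Finset.mem_image, Finset.mem_univ, true_and] at hs
    obtain ⟨l, rfl⟩ := hs
    simp only [Finset.mem_filter, Finset.mem_univ, true_and] at hv hw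
    rw [hv, hw]
  · intro h
    refine ⟨Finset.univ.filter (fun u => f u = f v), ?_, ?_, ?_⟩
    · simp only [fibers, Finset.mem_image, Finset.mem_univ, true_and]
      exact ⟨f v, rfl⟩
    · simp
    · simp [h]

lemma fibers_isGridPartition {n : ℕ} (f : Fin n × Fin n → Fin n)
    (hcard : ∀ l, (Finset.univ.filter (fun v => f v = l)).card = n)
    (hconn : ∀ l, ((gridGraph n).induce {v | f v = l}).Connected) :
    IsGridPartition n (fibers f) := by
  refine ⟨?_, ?_, ?_, ?_⟩
  · rw [fibers, Finset.card_image_of_injective, Finset.card_univ, Fintype.card_fin]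
    intro l l' h
    have hpos : 0 < (Finset.univ.filter (fun v => f v = l)).card := by
      rw [hcard]; exact l.pos
    obtain ⟨v, hv⟩ := Finset.card_pos.mp hpos
    have hv' : v ∈ Finset.univ.filter (fun v => f v = l') := by
      have h' : Finset.univ.filter (fun v => f v = l) =
        Finset.univ.filter (fun v => f v = l') := h
      rw [← h']; exact hv
    simp only [Finset.mem_filter, Finset.mem_univ, true_and] at hv hv'
    rw [← hv, ← hv']
  · intro s hs
    simp only [fibers, Finset.mem_image, Finset.mem_univ, true_and] at hs
    obtain ⟨l, rfl⟩ := hs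
    exact hcard l
  · intro s hs
    simp only [fibers, Finset.mem_image, Finset.mem_univ, true_and] at hs
    obtain ⟨l, rfl⟩ := hs
    have e : (↑(Finset.univ.filter (fun v => f v = l)) : Set (Fin n × Fin n)) = {v | f v = l} := by
      ext v; simp
    rw [e]
    exact hconn l
  · intro v
    refine ⟨Finset.univ.filter (fun u => f u = f v), ⟨?_, by simp⟩, ?_⟩
    · simp only [fibers, Finset.mem_image, Finset.mem_univ, true_and]
      exact ⟨f v, rfl⟩
    · rintro s ⟨hs, hv⟩
      simp only [fibers, Finset.mem_image, Finset.mem_univ, true_and] at hs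
      obtain ⟨l, rfl⟩ := hs
      simp only [Finset.mem_filter, Finset.mem_univ, true_and] at hv
      rw [hv]

/-- The labelling attached to a set of swaps, with values in `Fin n`. -/
def labF (n : ℕ) (S : Finset (ℕ × ℕ)) (hS : S ⊆ pos n) (v : Fin n × Fin n) : Fin n :=
  ⟨lab n S v.1 v.2, by
    have := sw_lt hS (v := ((v.1 : ℕ), (v.2 : ℕ))) v.1.2 v.2.2
    exact (base_lt this.1 this.2).1⟩

/-- Labelling together with the position inside the part. -/
def labE (n : ℕ) (S : Finset (ℕ × ℕ)) (hS : S ⊆ pos n) (v : Fin n × Fin n) : Fin n × Fin n :=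
  (labF n S hS v, ⟨baseRest n (sw S (v.1, v.2)), by
    have := sw_lt hS (v := ((v.1 : ℕ), (v.2 : ℕ))) v.1.2 v.2.2
    exact (base_lt this.1 this.2).2⟩)

lemma labE_bij (n : ℕ) (S : Finset (ℕ × ℕ)) (hS : S ⊆ pos n) :
    Function.Bijective (labE n S hS) := by
  rw [← Finite.injective_iff_bijective]
  intro v w h
  have hv := sw_lt hS (v := ((v.1 : ℕ), (v.2 : ℕ))) v.1.2 v.2.2
  have hw := sw_lt hS (v := ((w.1 : ℕ), (w.2 : ℕ))) w.1.2 w.2.2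
  have ha := congrArg (fun x => (x.1 : ℕ)) h
  have hb := congrArg (fun x => (x.2 : ℕ)) h
  have := base_inj hv.1 hv.2 hw.1 hw.2 ha hb
  have h2 := congrArg (sw S) this
  rw [sw_sw, sw_sw, Prod.mk.injEq] at h2
  exact Prod.ext (Fin.ext h2.1) (Fin.ext h2.2)

lemma labF_card (n : ℕ) (S : Finset (ℕ × ℕ)) (hS : S ⊆ pos n) (l : Fin n) :
    (Finset.univ.filter (fun v => labF n S hS v = l)).card = n := by
  have h : (Finset.univ.filter (fun v => labF n S hS v = l)).card =
      (Finset.univ.image (fun k : Fin n => (l, k))).card := by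
    refine Finset.card_bijective (labE n S hS) (labE_bij n S hS) ?_
    intro v
    simp only [Finset.mem_filter, Finset.mem_univ, true_and, Finset.mem_image]
    constructor
    · intro hv
      exact ⟨(labE n S hS v).2, Prod.ext (by simp [labE, hv]) rfl⟩
    · rintro ⟨k, hk⟩
      have := congrArg Prod.fst hk
      simpa [labE] using this.symm
  rw [h, Finset.card_image_of_injective _ (fun a b hab => (Prod.mk.inj hab).2)]
  simp

lemma labF_conn (n : ℕ) (S : Finset (ℕ × ℕ)) (hS : S ⊆ pos n) (l : Fin n) :
    ((gridGraph n).induce {v | labF n S hS v = l}).Connected := by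
  have hn := l.pos
  have hrt : ∀ l, l + 1 ≤ n → (rootOf n l).1 < n ∧ (rootOf n l).2 < n := by
    intro l hl
    unfold rootOf
    split_ifs <;> constructor <;> dsimp only <;> omega
  have hl := hrt l l.2
  refine conn_of_rank _ _ (fun v => rankOf n l v.1 v.2)
    (⟨(rootOf n l).1, hl.1⟩, ⟨(rootOf n l).2, hl.2⟩) ?_ ?_
  · have hpos : 0 < (Finset.univ.filter (fun v => labF n S hS v = l)).card := by
      rw [labF_card]; exact l.pos
    obtain ⟨v, hv⟩ := Finset.card_pos.mp hpos
    exact ⟨v, by simpa using hv⟩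
  · rintro v hv
    have hv' : lab n S v.1 v.2 = l := congrArg Fin.val hv
    rcases step hS v.1.2 v.2.2 with h | ⟨r', c', hr, hc, hlab, hadj, hrank⟩
    · left
      rw [hv'] at h
      refine Prod.ext (Fin.ext ?_) (Fin.ext ?_)
      · exact congrArg Prod.fst h
      · exact congrArg Prod.snd h
    · right
      refine ⟨(⟨r', hr⟩, ⟨c', hc⟩), ?_, ?_, ?_⟩
      · exact Fin.ext (hlab.trans hv')
      · rw [gridGraph, SimpleGraph.fromRel_adj]
        simp only [Fin.ext_iff]
        refine ⟨?_, ?_⟩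
        · intro h
          rw [h] at hadj
          simp at hadj
        · omega
      · rw [hv'] at hrank
        exact hrank

lemma labF_inj (n : ℕ) (S S' : Finset (ℕ × ℕ)) (hS : S ⊆ pos n) (hS' : S' ⊆ pos n)
    (h : fibers (labF n S hS) = fibers (labF n S' hS')) : S = S' := by
  have key : ∀ (S : Finset (ℕ × ℕ)) (hS : S ⊆ pos n) (i j : ℕ) (hi : i < n / 8) (hj : j < n / 4),
      (labF n S hS (⟨2 * i, by omega⟩, ⟨4 * j, by omega⟩) =
        labF n S hS (⟨2 * i, by omega⟩, ⟨4 * j + 1, by omega⟩)) ↔ (i, j) ∉ S := by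
    intro S hS i j hi hj
    have e1 : 2 * i / 2 = i := by omega
    have e2 : 4 * j / 4 = j := by omega
    have e3 : (4 * j + 1) / 4 = j := by omega
    rw [Fin.ext_iff]
    change lab n S (2 * i) (4 * j) = lab n S (2 * i) (4 * j + 1) ↔ _
    by_cases hm : (i, j) ∈ S
    · rw [lab_a (by rwa [e1, e2]) hS, lab_a (by rwa [e1, e3]) hS]
      simp only [hm, not_true, iff_false]
      split_ifs <;> omega
    · rw [lab_b (by rwa [e1, e2]), lab_b (by rwa [e1, e3])]
      simp only [hm, not_false_iff, iff_true]
      split_ifs <;> omega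
  ext ⟨i, j⟩
  by_cases hij : (i, j) ∈ pos n
  · have := mem_pos (Finset.Subset.refl _) hij
    have k1 := key S hS i j this.1 this.2
    have k2 := key S' hS' i j this.1 this.2
    rw [← same_fiber] at k1 k2
    rw [h] at k1
    exact not_iff_not.mp (k1.symm.trans k2)
  · exact ⟨fun h => absurd (hS h) hij, fun h => absurd (hS' h) hij⟩

lemma lower_bound (n : ℕ) : 2 ^ (n / 8 * (n / 4)) ≤ gridPartitionCount n := by
  have h : Nat.card {S : Finset (ℕ × ℕ) // S ∈ (pos n).powerset} ≤ gridPartitionCount n := by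
    unfold gridPartitionCount
    refine Nat.card_le_card_of_injective
      (fun S => ⟨fibers (labF n S.1 (Finset.mem_powerset.mp S.2)),
        fibers_isGridPartition _ (labF_card n _ _) (labF_conn n _ _)⟩) ?_
    intro S S' h
    exact Subtype.ext (labF_inj n _ _ _ _ (congrArg Subtype.val h))
  rw [Nat.card_eq_fintype_card, Fintype.card_coe, Finset.card_powerset] at h
  simpa [pos] using h

/-- The set of cut edges of a partition. -/
def cutSet (n : ℕ) (P : Finset (Finset (Fin n × Fin n))) : Set (Sym2 (Fin n × Fin n)) :=
  {e ∈ (gridGraph n).edgeSet | ¬ ∃ s ∈ P, ∀ v ∈ e, v ∈ s}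

lemma cutSet_inj {n : ℕ} {P Q : Finset (Finset (Fin n × Fin n))} (hP : IsGridPartition n P)
    (hQ : IsGridPartition n Q) (h : cutSet n P = cutSet n Q) : P = Q := by
  obtain ⟨cP, sP, kP, uP⟩ := hP
  obtain ⟨cQ, sQ, kQ, uQ⟩ := hQ
  refine Finset.eq_of_subset_of_card_le ?_ (by omega)
  intro s hs
  have hc := kP s hs
  obtain ⟨⟨v0, hv0⟩⟩ := hc.nonempty
  obtain ⟨t, ⟨ht, hvt⟩, -⟩ := uQ v0
  have hsub : s ⊆ t := by
    intro w hw
    have walk : ∀ (a b : (↑s : Set (Fin n × Fin n)))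
        (_ : ((gridGraph n).induce (↑s : Set (Fin n × Fin n))).Walk a b), a.1 ∈ t → b.1 ∈ t := by
      intro a b p
      induction p with
      | nil => exact id
      | @cons a c b hadj p ih =>
        intro ha
        apply ih
        have hadj' : (gridGraph n).Adj a.1 c.1 := by simpa using hadj
        have hnot : s(a.1, c.1) ∉ cutSet n P := by
          rintro ⟨-, hn⟩
          apply hn
          refine ⟨s, hs, ?_⟩
          intro v hv
          rcases Sym2.mem_iff.mp hv with rfl | rfl
          · exact a.2
          · exact c.2
        rw [h] at hnot
        have : ∃ s ∈ Q, ∀ v ∈ s(a.1, c.1), v ∈ s := by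
          by_contra hcon
          exact hnot ⟨hadj', hcon⟩
        obtain ⟨t', ht', hall⟩ := this
        have e : t' = t := (uQ a.1).unique ⟨ht', hall _ (Sym2.mem_mk_left _ _)⟩ ⟨ht, ha⟩
        rw [← e]
        exact hall _ (Sym2.mem_mk_right _ _)
    obtain ⟨p⟩ := hc.preconnected ⟨v0, hv0⟩ ⟨w, hw⟩
    exact walk _ _ p hvt
  have : s = t := Finset.eq_of_subset_of_card_le hsub (by rw [sP s hs, sQ t ht])
  rw [this]
  exact ht

lemma edge_count (n : ℕ) : (gridGraph n).edgeSet.ncard ≤ 2 * n ^ 2 := by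
  classical
  let g : (Fin n × Fin n) × Bool → Sym2 (Fin n × Fin n) := fun x =>
    if x.2 then
      (if h : (x.1.1 : ℕ) + 1 < n then s(x.1, (⟨x.1.1 + 1, h⟩, x.1.2)) else s(x.1, x.1))
    else
      (if h : (x.1.2 : ℕ) + 1 < n then s(x.1, (x.1.1, ⟨x.1.2 + 1, h⟩)) else s(x.1, x.1))
  have hsub : (gridGraph n).edgeSet ⊆ Set.range g := by
    have main : ∀ a b : Fin n × Fin n,
        ((a.1 = b.1 ∧ (a.2 : ℕ) + 1 = (b.2 : ℕ)) ∨ (a.2 = b.2 ∧ (a.1 : ℕ) + 1 = (b.1 : ℕ))) →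
        s(a, b) ∈ Set.range g := by
      rintro ⟨a1, a2⟩ ⟨b1, b2⟩ (⟨h1, h2⟩ | ⟨h1, h2⟩)
      · dsimp only at h1 h2
        have hlt : (a2 : ℕ) + 1 < n := by have := b2.2; omega
        refine ⟨((a1, a2), false), ?_⟩
        have : b2 = ⟨a2 + 1, hlt⟩ := Fin.ext h2.symm
        simp [g, hlt, this, h1]
      · dsimp only at h1 h2
        have hlt : (a1 : ℕ) + 1 < n := by have := b1.2; omega
        refine ⟨((a1, a2), true), ?_⟩
        have : b1 = ⟨a1 + 1, hlt⟩ := Fin.ext h2.symm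
        simp [g, hlt, this, h1]
    intro e
    induction e using Sym2.ind with
    | _ a b =>
      intro he
      rw [SimpleGraph.mem_edgeSet, gridGraph, SimpleGraph.fromRel_adj] at he
      rcases he.2 with h | h
      · exact main a b h
      · rw [Sym2.eq_swap]; exact main b a h
  calc (gridGraph n).edgeSet.ncard ≤ (Set.range g).ncard := Set.ncard_le_ncard hsub
    _ ≤ Nat.card ((Fin n × Fin n) × Bool) := by
      rw [← Set.image_univ, ← Set.ncard_univ]
      exact Set.ncard_image_le
    _ = 2 * n ^ 2 := by
      simp [Nat.card_eq_fintype_card]; ring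

lemma small_subsets {α : Type*} (E : Finset α) (F : Finset (Finset α)) (k : ℕ)
    (hF : ∀ A ∈ F, A ⊆ E ∧ A.card ≤ k) (x : ℝ) (hx0 : 0 < x) (hx1 : x ≤ 1) :
    (F.card : ℝ) * x ^ k ≤ (1 + x) ^ E.card := by
  have h1 : ∑ A ∈ E.powerset, x ^ A.card = (1 + x) ^ E.card := by
    have := Finset.sum_pow_mul_eq_add_pow x 1 E
    simp only [one_pow, mul_one] at this
    rw [this, add_comm]
  rw [← h1]
  calc (F.card : ℝ) * x ^ k = ∑ A ∈ F, x ^ k := by rw [Finset.sum_const, nsmul_eq_mul]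
    _ ≤ ∑ A ∈ F, x ^ A.card :=
      Finset.sum_le_sum fun A hA => pow_le_pow_of_le_one hx0.le hx1 (hF A hA).2
    _ ≤ ∑ A ∈ E.powerset, x ^ A.card :=
      Finset.sum_le_sum_of_subset_of_nonneg
        (fun A hA => Finset.mem_powerset.mpr (hF A hA).1) (fun A _ _ => by positivity)

lemma upper_bound (n k : ℕ) (p : Finset (Finset (Fin n × Fin n)) → Prop)
    (hp : ∀ P, p P → IsGridPartition n P ∧ cutScore n P ≤ k) :
    (Nat.card {P : Finset (Finset (Fin n × Fin n)) // p P} : ℝ) * (1 / 1024 : ℝ) ^ k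
      ≤ (1 + 1 / 1024 : ℝ) ^ (2 * n ^ 2) := by
  classical
  let U : Finset (Finset (Finset (Fin n × Fin n))) := Finset.univ.filter p
  let F : Finset (Finset (Sym2 (Fin n × Fin n))) := U.image (fun P => (cutSet n P).toFinset)
  have hcard : Nat.card {P : Finset (Finset (Fin n × Fin n)) // p P} = F.card := by
    rw [Finset.card_image_of_injOn, Nat.card_eq_fintype_card, Fintype.card_subtype]
    intro P hP Q hQ h
    have hP' : p P := by simpa [U] using hP
    have hQ' : p Q := by simpa [U] using hQ
    exact cutSet_inj (hp P hP').1 (hp Q hQ').1 (Set.toFinset_inj.mp h)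
  rw [hcard]
  refine (small_subsets (gridGraph n).edgeSet.toFinset F k ?_ (1 / 1024) (by norm_num)
    (by norm_num)).trans ?_
  · intro A hA
    obtain ⟨P, hP, rfl⟩ := Finset.mem_image.mp hA
    have hP' : p P := by simpa [U] using hP
    refine ⟨?_, ?_⟩
    · intro e he
      rw [Set.mem_toFinset] at he ⊢
      exact he.1
    · rw [← Set.ncard_eq_toFinset_card']
      exact (hp P hP').2
  · apply pow_le_pow_right₀ (by norm_num)
    rw [← Set.ncard_eq_toFinset_card']
    exact edge_count n

lemma final_bound (n : ℕ) (hn : 64 ≤ n) (C G : ℝ) (hC : 0 ≤ C)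
    (hCu : C * (1 / 1024 : ℝ) ^ (n ^ 2 / 2560) ≤ (1 + 1 / 1024 : ℝ) ^ (2 * n ^ 2))
    (hG : (2 : ℝ) ^ (n / 8 * (n / 4)) ≤ G) : C / G ≤ Real.exp (-(n : ℝ) / 2560) := by
  have hGpos : 0 < G := lt_of_lt_of_le (by positivity) hG
  rw [div_le_iff₀ hGpos]
  have hl2 := Real.log_two_gt_d9
  have e2 : Real.exp (Real.log 2) = 2 := Real.exp_log (by norm_num)
  have h1 : (1 + 1 / 1024 : ℝ) ^ (2 * n ^ 2) ≤ Real.exp ((n : ℝ) ^ 2 / 512) := by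
    calc (1 + 1 / 1024 : ℝ) ^ (2 * n ^ 2) ≤ (Real.exp (1 / 1024)) ^ (2 * n ^ 2) := by
          apply pow_le_pow_left₀ (by norm_num)
          linarith [Real.add_one_le_exp (1 / 1024 : ℝ)]
      _ = Real.exp ((n : ℝ) ^ 2 / 512) := by
          rw [← Real.exp_nat_mul]; congr 1; push_cast; ring
  have h2 : (1024 : ℝ) ^ (n ^ 2 / 2560) ≤ Real.exp (Real.log 2 * ((n : ℝ) ^ 2 / 256)) := by
    have hk : ((n ^ 2 / 2560 : ℕ) : ℝ) ≤ (n : ℝ) ^ 2 / 2560 := by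
      have := @Nat.cast_div_le ℝ _ _ _ (n ^ 2) 2560
      push_cast at this
      exact this
    calc (1024 : ℝ) ^ (n ^ 2 / 2560) = (Real.exp (Real.log 2)) ^ (10 * (n ^ 2 / 2560)) := by
          rw [e2, pow_mul]; norm_num
      _ = Real.exp (Real.log 2 * (10 * (n ^ 2 / 2560 : ℕ))) := by
          rw [← Real.exp_nat_mul]; congr 1; push_cast; ring
      _ ≤ _ := by
          apply Real.exp_le_exp.mpr
          apply mul_le_mul_of_nonneg_left _ (by linarith)
          linarith
  have h3 : Real.exp (Real.log 2 * ((n : ℝ) ^ 2 / 128)) ≤ G := by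
    refine le_trans ?_ hG
    have : (2 : ℝ) ^ (n / 8 * (n / 4)) = Real.exp (Real.log 2 * ((n / 8 * (n / 4) : ℕ) : ℝ)) := by
      rw [mul_comm (Real.log 2), Real.exp_nat_mul, e2]
    rw [this]
    apply Real.exp_le_exp.mpr
    apply mul_le_mul_of_nonneg_left _ (by linarith)
    have a : n ≤ 16 * (n / 8) := by omega
    have b : n ≤ 8 * (n / 4) := by omega
    have ab : n * n ≤ (16 * (n / 8)) * (8 * (n / 4)) := Nat.mul_le_mul a b
    have abr : ((n * n : ℕ) : ℝ) ≤ (((16 * (n / 8)) * (8 * (n / 4)) : ℕ) : ℝ) := by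
      exact_mod_cast ab
    have e : ((16 * (n / 8)) * (8 * (n / 4)) : ℕ) = 128 * (n / 8 * (n / 4)) := by ring
    rw [e] at abr
    rw [Nat.cast_mul, Nat.cast_mul 128] at abr
    have e' : ((128 : ℕ) : ℝ) = 128 := by norm_num
    rw [e'] at abr
    nlinarith
  have h4 : C ≤ Real.exp ((n : ℝ) ^ 2 / 512) * Real.exp (Real.log 2 * ((n : ℝ) ^ 2 / 256)) := by
    have : C = C * (1 / 1024 : ℝ) ^ (n ^ 2 / 2560) * (1024 : ℝ) ^ (n ^ 2 / 2560) := by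
      rw [mul_assoc, ← mul_pow]; norm_num
    rw [this]
    exact mul_le_mul (hCu.trans h1) h2 (by positivity) (by positivity)
  refine h4.trans ((?_ : _ ≤ _).trans
    (mul_le_mul_of_nonneg_left h3 (Real.exp_pos _).le))
  rw [← Real.exp_add, ← Real.exp_add]
  apply Real.exp_le_exp.mpr
  have hn' : (64 : ℝ) ≤ n := by exact_mod_cast hn
  have hsq : (n : ℝ) ≤ (n : ℝ) ^ 2 := by nlinarith
  have hsq2 : 0.69 * (n : ℝ) ^ 2 ≤ Real.log 2 * (n : ℝ) ^ 2 :=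
    mul_le_mul_of_nonneg_right (by linarith) (by positivity)
  linarith

theorem exists_eps_most_plans_not_compact :
    ∃ ε : ℝ, 0 < ε ∧
      Tendsto (fun n : ℕ =>
        (Nat.card {P : Finset (Finset (Fin n × Fin n)) //
            IsGridPartition n P ∧ (cutScore n P : ℝ) ≤ ε * (n : ℝ) ^ 2} : ℝ) /
          (gridPartitionCount n : ℝ)) atTop (nhds 0) := by
  refine ⟨1 / 2560, by norm_num, ?_⟩
  have hlim : Tendsto (fun n : ℕ => Real.exp (-(n : ℝ) / 2560)) atTop (nhds 0) := by
    apply Real.tendsto_exp_atBot.comp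
    have h1 : Tendsto (fun n : ℕ => (n : ℝ) / 2560) atTop atTop :=
      tendsto_natCast_atTop_atTop.atTop_div_const (by norm_num)
    have h2 := tendsto_neg_atTop_atBot.comp h1
    refine h2.congr ?_
    intro n
    simp only [Function.comp]
    ring
  refine squeeze_zero' (Eventually.of_forall fun n => by positivity) ?_ hlim
  filter_upwards [eventually_ge_atTop 64] with n hn
  apply final_bound n hn _ _ (by positivity)
  · apply upper_bound
    rintro P ⟨hP, hcut⟩
    refine ⟨hP, ?_⟩
    rw [Nat.le_div_iff_mul_le (by norm_num)]
    have : (cutScore n P : ℝ) * 2560 ≤ (n : ℝ) ^ 2 := by linarith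
    exact_mod_cast this
  · exact_mod_cast lower_bound n
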